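/- Let k be a perfect field of characteristic different from 2, and let A be a finite-dimensional k-algebra that is ring-indecomposable (its only central idempotents are 0 and 1), not semisimple, and periodic. Then the minimal period of A, i.e., the least integer n ≥ 1 for which there exists an exact sequence 0 → A → P_{n-1} → ⋯ → P_0 → A → 0 of A-A-bimodules with each P_i a projective A ⊗_k A^op-module, is even. -/

import Mathlib

open TensorProduct

/-- There is an exact sequence `0 → M → P_n → ⋯ → P_1 → N → 0` of `R`-modules
(so with `n` middle terms) in which each middle term `P_i` is projective. -/
def HasProjExactSeq (R : Type) [Ring R] (M N : ModuleCat R) (n : ℕ) : Prop :=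
  ∃ (P : ℕ → ModuleCat R) (d : ∀ i, P (i + 1) →ₗ[R] P i)
    (_ : (P 0 : Type) ≃ₗ[R] N) (_ : (M : Type) ≃ₗ[R] P (n + 1)),
    (∀ i, 1 ≤ i → i ≤ n → Module.Projective R (P i)) ∧
    Function.Surjective (d 0) ∧ Function.Injective (d n) ∧
    ∀ i < n, LinearMap.range (d (i + 1)) = LinearMap.ker (d i)

/-- The regular bimodule `B` as a module over the enveloping algebra `B ⊗[k] Bᵐᵒᵖ`. -/
noncomputable def regularBimodule (k B : Type) [Field k] [Ring B] [Algebra k B] :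
    ModuleCat (B ⊗[k] Bᵐᵒᵖ) :=
  letI : Module (B ⊗[k] Bᵐᵒᵖ) B := TensorProduct.Algebra.module
  ModuleCat.of _ B

/-!
Let `ζ ∈ Extⁿ(A, A)` be the Yoneda class, over the enveloping algebra, of an exact sequence
`0 → A → Pₙ → ⋯ → P₁ → A → 0` with projective middle terms. By dimension shifting, a class of
positive degree that vanishes after composition with `ζ` is already zero. All syzygies in the
sequence are projective as one-sided modules, so tensoring it over `A` with a bimodule, on either
side, keeps it exact. Hence both `ζ²` and `(-1)^(n * n) ζ²` are computed by the grid
`ζ ⊗_A ζ`, whose squares anticommute by the `3 × 3` lemma. If `n` is odd, then `2 ζ² = 0`, so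
`2 ζ = 0`, and as `2` is invertible the last map `A → Pₙ` splits. Thus `A` is a projective bimodule,
that is, a separable algebra, and averaging over a separability idempotent splits every inclusion
of `A`-modules.
-/

open CategoryTheory Abelian

universe w v u

section ShortExact

variable {R : Type u} [Ring R]
  {M N L M' N' L' : Type u} [AddCommGroup M] [AddCommGroup N] [AddCommGroup L]
  [AddCommGroup M'] [AddCommGroup N'] [AddCommGroup L']
  [Module R M] [Module R N] [Module R L] [Module R M'] [Module R N'] [Module R L']

/-- The linear maps `f` and `g` form a short exact sequence `0 → M → N → L → 0`. -/
structure IsShortExact (f : M →ₗ[R] N) (g : N →ₗ[R] L) : Prop where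
  injective : Function.Injective f
  surjective : Function.Surjective g
  exact : Function.Exact f g

/-- A linear map as a degree-zero extension class. -/
noncomputable def extOfLinearMap (f : M →ₗ[R] N) :
    Ext (ModuleCat.of R M) (ModuleCat.of R N) 0 :=
  Ext.mk₀ (ModuleCat.ofHom f)

lemma extOfLinearMap_comp (f : M →ₗ[R] N) (g : N →ₗ[R] L) :
    (extOfLinearMap f).comp (extOfLinearMap g) (zero_add 0) = extOfLinearMap (g ∘ₗ f) := by
  simp only [extOfLinearMap, Ext.mk₀_comp_mk₀, ModuleCat.ofHom_comp]

lemma extOfLinearMap_add (f g : M →ₗ[R] N) :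
    extOfLinearMap (f + g) = extOfLinearMap f + extOfLinearMap g :=
  Ext.mk₀_add _ _

lemma extOfLinearMap_neg (f : M →ₗ[R] N) : extOfLinearMap (-f) = -extOfLinearMap f :=
  Ext.mk₀_neg _

lemma extOfLinearMap_id_comp {Y : ModuleCat.{u} R} {n : ℕ} (z : Ext (ModuleCat.of R M) Y n) :
    (extOfLinearMap (LinearMap.id : M →ₗ[R] M)).comp z (zero_add n) = z :=
  Ext.mk₀_id_comp z

lemma comp_extOfLinearMap_id {X : ModuleCat.{u} R} {n : ℕ} (z : Ext X (ModuleCat.of R M) n) :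
    z.comp (extOfLinearMap (LinearMap.id : M →ₗ[R] M)) (add_zero n) = z :=
  Ext.comp_mk₀_id z

lemma eq_zero_of_extOfLinearMap_comp_eq_zero (e : M ≃ₗ[R] N) {Y : ModuleCat.{u} R} {n : ℕ}
    {z : Ext (ModuleCat.of R N) Y n}
    (hz : (extOfLinearMap e.toLinearMap).comp z (zero_add n) = 0) : z = 0 := by
  rw [← extOfLinearMap_id_comp z, ← e.comp_symm, ← extOfLinearMap_comp,
    Ext.comp_assoc_of_second_deg_zero, hz, Ext.comp_zero]

lemma exists_lift_of_injective_of_exact {X : Type u} [AddCommGroup X] [Module R X]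
    {f : M →ₗ[R] N} {g : N →ₗ[R] L} (hf : Function.Injective f) (hfg : Function.Exact f g)
    (φ : X →ₗ[R] N) (hφ : ∀ x, g (φ x) = 0) : ∃ ψ : X →ₗ[R] M, ∀ x, f (ψ x) = φ x := by
  have hmem : ∀ x, φ x ∈ LinearMap.range f := fun x => (hfg _).1 (hφ x)
  refine ⟨(LinearEquiv.ofInjective f hf).symm.toLinearMap ∘ₗ φ.codRestrict _ hmem, fun x => ?_⟩
  exact congrArg Subtype.val
    ((LinearEquiv.ofInjective f hf).apply_symm_apply (φ.codRestrict _ hmem x))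

namespace IsShortExact

variable {f : M →ₗ[R] N} {g : N →ₗ[R] L} {f' : M' →ₗ[R] N'} {g' : N' →ₗ[R] L'}

lemma restrictScalars (S : Type u) [Ring S] [Module S M] [Module S N] [Module S L]
    [LinearMap.CompatibleSMul M N S R] [LinearMap.CompatibleSMul N L S R]
    (h : IsShortExact f g) : IsShortExact (f.restrictScalars S) (g.restrictScalars S) :=
  { h with }

lemma of_splitting (r : N →+ M) (s : L →+ N) (hrf : ∀ x, r (f x) = x) (hgs : ∀ x, g (s x) = x)
    (hsum : ∀ x, f (r x) + s (g x) = x) : IsShortExact f g where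
  injective := Function.LeftInverse.injective hrf
  surjective := Function.RightInverse.surjective hgs
  exact x := by
    refine ⟨fun hx => ⟨r x, ?_⟩, ?_⟩
    · simpa only [hx, map_zero, add_zero] using hsum x
    · rintro ⟨y, rfl⟩
      have hsgf : s (g (f y)) = 0 := by simpa only [hrf, add_eq_left] using hsum (f y)
      rw [← hgs (g (f y)), hsgf, map_zero]

/-- A short exact sequence of modules as a short complex in the category of modules. -/
def shortComplex (h : IsShortExact f g) : ShortComplex (ModuleCat.{u} R) :=
  ShortComplex.mk (ModuleCat.ofHom f) (ModuleCat.ofHom g)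
    (ModuleCat.hom_ext (LinearMap.ext h.exact.apply_apply_eq_zero))

lemma shortExact (h : IsShortExact f g) : h.shortComplex.ShortExact where
  exact := (ShortComplex.ShortExact.moduleCat_exact_iff_function_exact _).2 h.exact
  mono_f := (ModuleCat.mono_iff_injective _).2 h.injective
  epi_g := (ModuleCat.epi_iff_surjective _).2 h.surjective

/-- The Yoneda class in `Ext¹(L, M)` of a short exact sequence `0 → M → N → L → 0`. -/
noncomputable def extClass (h : IsShortExact f g) :
    Ext (ModuleCat.of R L) (ModuleCat.of R M) 1 :=
  h.shortExact.extClass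

lemma extClass_naturality (h : IsShortExact f g) (h' : IsShortExact f' g') (a : M →ₗ[R] M')
    (b : N →ₗ[R] N') (c : L →ₗ[R] L') (hab : ∀ x, f' (a x) = b (f x))
    (hbc : ∀ x, g' (b x) = c (g x)) :
    h.extClass.comp (extOfLinearMap a) (add_zero 1) =
      (extOfLinearMap c).comp h'.extClass (zero_add 1) :=
  ShortComplex.ShortExact.extClass_naturality h.shortExact h'.shortExact
    (ShortComplex.Hom.mk (ModuleCat.ofHom a) (ModuleCat.ofHom b) (ModuleCat.ofHom c)
      (ModuleCat.hom_ext (LinearMap.ext hab)) (ModuleCat.hom_ext (LinearMap.ext hbc)))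

lemma extClass_comp_of_right_id (h : IsShortExact f g) {g' : N' →ₗ[R] L}
    (h' : IsShortExact f' g') (a : M →ₗ[R] M') (b : N →ₗ[R] N') (hab : ∀ x, f' (a x) = b (f x))
    (hbc : ∀ x, g' (b x) = g x) :
    h.extClass.comp (extOfLinearMap a) (add_zero 1) = h'.extClass := by
  rw [h.extClass_naturality h' a b LinearMap.id hab hbc, extOfLinearMap_id_comp]

lemma eq_zero_of_extClass_comp_eq_zero (h : IsShortExact f g) [Module.Projective R N]
    {Y : ModuleCat.{u} R} {m m' : ℕ} (hm : 1 + (m + 1) = m')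
    (z : Ext (ModuleCat.of R M) Y (m + 1)) (hz : h.extClass.comp z hm = 0) : z = 0 := by
  obtain ⟨y, rfl⟩ := Ext.contravariant_sequence_exact₁ h.shortExact Y z hm hz
  have : Projective (ModuleCat.of R N) := (IsProjective.iff_projective (R := R) N).1 inferInstance
  have hy : y = 0 := Ext.eq_zero_of_projective (P := ModuleCat.of R N) y
  rw [hy]
  exact Ext.comp_zero _ _ _ _ _

lemma exists_extension_of_extClass_comp_eq_zero (h : IsShortExact f g) (φ : M →ₗ[R] M')
    (hφ : h.extClass.comp (extOfLinearMap φ) (add_zero 1) = 0) :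
    ∃ ψ : N →ₗ[R] M', ψ ∘ₗ f = φ := by
  obtain ⟨y, hy⟩ := Ext.contravariant_sequence_exact₁ h.shortExact _ _ (add_zero 1) hφ
  obtain ⟨ψ, rfl⟩ := (Ext.mk₀_bijective _ _).2 y
  rw [Ext.mk₀_comp_mk₀] at hy
  exact ⟨ψ.hom, congrArg ModuleCat.Hom.hom ((Ext.mk₀_bijective _ _).1 hy)⟩

lemma exists_splitting_of_projective (h : IsShortExact f g) [Module.Projective R L] :
    ∃ (r : N →ₗ[R] M) (s : L →ₗ[R] N), r ∘ₗ f = LinearMap.id ∧ g ∘ₗ s = LinearMap.id ∧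
      f ∘ₗ r + s ∘ₗ g = LinearMap.id := by
  obtain ⟨s, hgs⟩ := g.exists_rightInverse_of_surjective (LinearMap.range_eq_top.2 h.surjective)
  obtain ⟨r, hr⟩ := exists_lift_of_injective_of_exact h.injective h.exact (LinearMap.id - s ∘ₗ g)
    (fun x => by simpa [sub_eq_zero] using (LinearMap.congr_fun hgs (g x)).symm)
  refine ⟨r, s, LinearMap.ext fun x => h.injective ?_, hgs, LinearMap.ext fun x => ?_⟩ <;>
    simp [hr, h.exact.apply_apply_eq_zero]

end IsShortExact

end ShortExact

section ThreeByThree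

variable {R : Type u} [Ring R]
  {X₀₀ X₀₁ X₀₂ X₁₀ X₁₁ X₁₂ X₂₀ X₂₁ X₂₂ : Type u}
  [AddCommGroup X₀₀] [AddCommGroup X₀₁] [AddCommGroup X₀₂]
  [AddCommGroup X₁₀] [AddCommGroup X₁₁] [AddCommGroup X₁₂]
  [AddCommGroup X₂₀] [AddCommGroup X₂₁] [AddCommGroup X₂₂]
  [Module R X₀₀] [Module R X₀₁] [Module R X₀₂]
  [Module R X₁₀] [Module R X₁₁] [Module R X₁₂]
  [Module R X₂₀] [Module R X₂₁] [Module R X₂₂]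
  {f₀ : X₀₀ →ₗ[R] X₁₀} {g₀ : X₁₀ →ₗ[R] X₂₀}
  {f₁ : X₀₁ →ₗ[R] X₁₁} {g₁ : X₁₁ →ₗ[R] X₂₁}
  {f₂ : X₀₂ →ₗ[R] X₁₂} {g₂ : X₁₂ →ₗ[R] X₂₂}
  {u₀ : X₀₀ →ₗ[R] X₀₁} {v₀ : X₀₁ →ₗ[R] X₀₂}
  {u₁ : X₁₀ →ₗ[R] X₁₁} {v₁ : X₁₁ →ₗ[R] X₁₂}
  {u₂ : X₂₀ →ₗ[R] X₂₁} {v₂ : X₂₁ →ₗ[R] X₂₂}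

lemma IsShortExact.ker_subtype {M N : Type u} [AddCommGroup M] [AddCommGroup N] [Module R M]
    [Module R N] {g : M →ₗ[R] N} (hg : Function.Surjective g) :
    IsShortExact (LinearMap.ker g).subtype g :=
  ⟨Subtype.val_injective, hg, LinearMap.exact_subtype_ker_map g⟩

lemma IsShortExact.prod_codRestrict_ker (hf₂ : Function.Injective f₂)
    (hfg₂ : Function.Exact f₂ g₂) (hc₀ : IsShortExact u₀ v₀) (hc₁ : IsShortExact u₁ v₁)
    (huf : ∀ x, u₁ (f₀ x) = f₁ (u₀ x)) (hvf : ∀ x, v₁ (f₁ x) = f₂ (v₀ x))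
    (hker : ∀ y, LinearMap.coprod f₁ u₁ y ∈ LinearMap.ker (g₂ ∘ₗ v₁)) :
    IsShortExact (LinearMap.prod u₀ (-f₀)) ((LinearMap.coprod f₁ u₁).codRestrict _ hker) where
  injective := fun x y hxy => hc₀.injective (congrArg Prod.fst hxy)
  surjective := by
    rintro ⟨x, hx⟩
    obtain ⟨y, hy⟩ := (hfg₂ _).1 hx
    obtain ⟨y', rfl⟩ := hc₀.surjective y
    obtain ⟨z, hz⟩ := (hc₁.exact (x - f₁ y')).1 (by rw [map_sub, hvf, hy, sub_self])
    exact ⟨(y', z), Subtype.ext (by simp [hz])⟩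
  exact := by
    rintro ⟨y, z⟩
    constructor
    · intro h
      have hyz : f₁ y + u₁ z = 0 := congrArg Subtype.val h
      have hy : v₀ y = 0 := hf₂ (by
        rw [← hvf, map_zero, eq_neg_of_add_eq_zero_left hyz, map_neg,
          hc₁.exact.apply_apply_eq_zero, neg_zero])
      obtain ⟨t, rfl⟩ := (hc₀.exact _).1 hy
      refine ⟨t, Prod.ext rfl (hc₁.injective ?_)⟩
      change u₁ (-f₀ t) = u₁ z
      rw [map_neg, huf]
      exact (eq_neg_of_add_eq_zero_right hyz).symm
    · rintro ⟨t, ht⟩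
      rw [← ht]
      exact Subtype.ext (by simp [huf])

/-- Both composites factor through the class of `ker (X₁₁ → X₂₂) → X₁₁ → X₂₂`, followed by
the class of `X₀₀ → X₀₁ × X₁₀ → ker (X₁₁ → X₂₂)` up to the sign on `X₁₀`. -/
lemma extClass_comp_extClass_eq_neg
    (hr₀ : IsShortExact f₀ g₀) (hr₁ : Function.Exact f₁ g₁) (hr₂ : IsShortExact f₂ g₂)
    (hc₀ : IsShortExact u₀ v₀) (hc₁ : IsShortExact u₁ v₁) (hc₂ : IsShortExact u₂ v₂)
    (huf : ∀ x, u₁ (f₀ x) = f₁ (u₀ x)) (hug : ∀ x, u₂ (g₀ x) = g₁ (u₁ x))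
    (hvf : ∀ x, v₁ (f₁ x) = f₂ (v₀ x)) (hvg : ∀ x, v₂ (g₁ x) = g₂ (v₁ x)) :
    hr₂.extClass.comp hc₀.extClass (rfl : 1 + 1 = 2) =
      -hc₂.extClass.comp hr₀.extClass (rfl : 1 + 1 = 2) := by
  let K := LinearMap.ker (g₂ ∘ₗ v₁)
  have hK : IsShortExact K.subtype (g₂ ∘ₗ v₁) :=
    .ker_subtype (hr₂.surjective.comp hc₁.surjective)
  have hker (y : X₀₁ × X₁₀) : LinearMap.coprod f₁ u₁ y ∈ K := by
    simp [K, hvf, hc₁.exact.apply_apply_eq_zero, hr₂.exact.apply_apply_eq_zero]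
  have hG := IsShortExact.prod_codRestrict_ker hr₂.injective hr₂.exact hc₀ hc₁ huf hvf hker
  obtain ⟨p, hp⟩ := exists_lift_of_injective_of_exact hr₂.injective hr₂.exact
    (v₁ ∘ₗ K.subtype) (fun x => x.2)
  obtain ⟨q, hq⟩ := exists_lift_of_injective_of_exact hc₂.injective hc₂.exact
    (g₁ ∘ₗ K.subtype) (fun x => (hvg _).trans x.2)
  have hKp : hK.extClass.comp (extOfLinearMap p) (add_zero 1) = hr₂.extClass :=
    hK.extClass_comp_of_right_id hr₂ p v₁ hp (fun _ => rfl)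
  have hKq : hK.extClass.comp (extOfLinearMap q) (add_zero 1) = hc₂.extClass :=
    hK.extClass_comp_of_right_id hc₂ q g₁ hq hvg
  have hGp : hG.extClass = (extOfLinearMap p).comp hc₀.extClass (zero_add 1) := by
    rw [← hG.extClass_naturality hc₀ LinearMap.id (LinearMap.fst R _ _) p (fun _ => rfl)
      (fun x => hr₂.injective (by simp [hp, ← hvf, hc₁.exact.apply_apply_eq_zero])),
      comp_extOfLinearMap_id]
  have hGq : -hG.extClass = (extOfLinearMap q).comp hr₀.extClass (zero_add 1) := by
    rw [← hG.extClass_naturality hr₀ (-LinearMap.id) (LinearMap.snd R _ _) q (fun _ => by simp)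
      (fun x => hc₂.injective (by simp [hq, hug, hr₁.apply_apply_eq_zero])),
      extOfLinearMap_neg, Ext.comp_neg, comp_extOfLinearMap_id]
  rw [← hKp, ← hKq, Ext.comp_assoc_of_second_deg_zero, Ext.comp_assoc_of_second_deg_zero, ← hGp,
    ← hGq, Ext.comp_neg, neg_neg]

end ThreeByThree

section YonedaProduct

variable {C : Type u} [Category.{v} C] [Abelian C] [HasExt.{w} C]

lemma ext_zsmul_comp {X Y Z : C} {a b c : ℕ} (m : ℤ) (α : Ext X Y a) (β : Ext Y Z b)
    (h : a + b = c) : (m • α).comp β h = m • α.comp β h :=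
  map_zsmul (β.postcomp X h) m α

lemma ext_comp_zsmul {X Y Z : C} {a b c : ℕ} (m : ℤ) (α : Ext X Y a) (β : Ext Y Z b)
    (h : a + b = c) : α.comp (m • β) h = m • α.comp β h :=
  map_zsmul (α.precomp Z h) m β

/-- The Yoneda product `a₀ a₁ ⋯ aₙ₋₁ ∈ Extⁿ(T₀, Tₙ)` of consecutive classes
`aᵢ ∈ Ext¹(Tᵢ, Tᵢ₊₁)`. -/
noncomputable def yonedaProd {T : ℕ → C} :
    ∀ n : ℕ, (∀ i < n, Ext (T i) (T (i + 1)) 1) → Ext (T 0) (T n) n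
  | 0, _ => Ext.mk₀ (𝟙 _)
  | n + 1, a => (yonedaProd n fun i hi => a i (hi.trans n.lt_succ_self)).comp
      (a n n.lt_succ_self) rfl

lemma yonedaProd_succ {T : ℕ → C} (n : ℕ) (a : ∀ i < n + 1, Ext (T i) (T (i + 1)) 1) :
    yonedaProd (n + 1) a = (yonedaProd n fun i hi => a i (hi.trans n.lt_succ_self)).comp
      (a n n.lt_succ_self) rfl :=
  rfl

lemma yonedaProd_comp_eq_comp_yonedaProd {S T : ℕ → C} {n : ℕ}
    (a : ∀ i < n, Ext (S i) (S (i + 1)) 1) (b : ∀ i < n, Ext (T i) (T (i + 1)) 1)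
    (l : ∀ i, Ext (S i) (T i) 0)
    (hl : ∀ i hi, (a i hi).comp (l (i + 1)) (add_zero 1) = (l i).comp (b i hi) (zero_add 1)) :
    (yonedaProd n a).comp (l n) (add_zero n) = (l 0).comp (yonedaProd n b) (zero_add n) := by
  induction n with
  | zero => simp [yonedaProd]
  | succ n ih =>
    rw [yonedaProd_succ, yonedaProd_succ, Ext.comp_assoc_of_third_deg_zero, hl,
      ← Ext.comp_assoc_of_second_deg_zero, ih _ _ (fun i hi => hl i _),
      Ext.comp_assoc _ _ _ _ _ (by omega)]

lemma eq_zero_of_yonedaProd_comp_eq_zero {T : ℕ → C} {n : ℕ}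
    (a : ∀ i < n, Ext (T i) (T (i + 1)) 1) {Y : C} {p q : ℕ}
    (ha : ∀ i hi (l m : ℕ) (hlm : 1 + (l + 1) = m) (z : Ext (T (i + 1)) Y (l + 1)),
      (a i hi).comp z hlm = 0 → z = 0)
    (hpq : n + (p + 1) = q) (z : Ext (T n) Y (p + 1))
    (hz : (yonedaProd n a).comp z hpq = 0) : z = 0 := by
  induction n generalizing p q with
  | zero =>
    obtain rfl : p + 1 = q := by omega
    simpa [yonedaProd] using hz
  | succ n ih =>
    rw [yonedaProd_succ, Ext.comp_assoc _ _ _ _ (add_comm 1 (p + 1)) (by omega)] at hz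
    exact ha n _ _ _ _ z (ih _ (fun i hi => ha i _) _ _ hz)

variable {T : ℕ → ℕ → C} {p q : ℕ}
  (a : ∀ i < p, ∀ j, Ext (T i j) (T (i + 1) j) 1) (b : ∀ j < q, ∀ i, Ext (T i j) (T i (j + 1)) 1)

lemma comp_yonedaProd_of_anticommute {j : ℕ} (b : ∀ i, Ext (T i j) (T i (j + 1)) 1)
    (hab : ∀ i hi, (b i).comp (a i hi (j + 1)) rfl = -(a i hi j).comp (b (i + 1)) rfl)
    {m : ℕ} (h : 1 + p = m) (h' : p + 1 = m) :
    (b 0).comp (yonedaProd p fun i hi => a i hi (j + 1)) h =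
      (-1 : ℤ) ^ p • (yonedaProd p fun i hi => a i hi j).comp (b p) h' := by
  subst h'
  induction p with
  | zero => simp [yonedaProd]
  | succ p ih =>
    rw [yonedaProd_succ, yonedaProd_succ, ← Ext.comp_assoc (b 0) _ _ (add_comm 1 p) _ (by omega),
      ih (fun i hi => a i (hi.trans p.lt_succ_self)) (fun i hi => hab i _),
      ext_zsmul_comp, Ext.comp_assoc _ _ _ _ (rfl : 1 + 1 = 2) (by omega),
      Ext.comp_assoc _ _ _ _ (rfl : 1 + 1 = 2) (by omega), hab, Ext.comp_neg, pow_succ,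
      mul_neg_one, neg_smul, smul_neg]

lemma yonedaProd_comp_yonedaProd_of_anticommute
    (hab : ∀ i hi j hj, (b j hj i).comp (a i hi (j + 1)) rfl =
      -(a i hi j).comp (b j hj (i + 1)) rfl)
    {m : ℕ} (h : q + p = m) (h' : p + q = m) :
    (yonedaProd q fun j hj => b j hj 0).comp (yonedaProd p fun i hi => a i hi q) h =
      (-1 : ℤ) ^ (p * q) •
        (yonedaProd p fun i hi => a i hi 0).comp (yonedaProd q fun j hj => b j hj p) h' := by
  subst h'
  induction q with
  | zero => simp [yonedaProd]
  | succ q ih =>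
    rw [yonedaProd_succ, yonedaProd_succ, Ext.comp_assoc _ _ _ _ (add_comm 1 p) (by omega),
      comp_yonedaProd_of_anticommute a (b q _) (fun i hi => hab i hi q _) _ rfl, ext_comp_zsmul,
      ← Ext.comp_assoc _ _ _ (add_comm q p) _ (by omega),
      ih (fun j hj => b j (hj.trans q.lt_succ_self)) (fun i hi j hj => hab i hi j _),
      ext_zsmul_comp, Ext.comp_assoc _ _ _ _ rfl (by omega), smul_smul, mul_add, mul_one, pow_add,
      mul_comm]

end YonedaProduct

section Projective

lemma projective_of_isScalarTower (R : Type*) {S M : Type*} [Ring S] [Ring R] [AddCommGroup M]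
    [Module S R] [Module R M] [Module S M] [IsScalarTower S R R] [IsScalarTower S R M]
    [Module.Projective S R] [Module.Projective R M] : Module.Projective S M := by
  classical
  obtain ⟨s, hs⟩ := Module.projective_def'.1 (inferInstance : Module.Projective R M)
  have : Module.Projective S (M →₀ R) :=
    .of_equiv' (finsuppLequivDFinsupp (ι := M) (M := R) S).symm
  exact .of_split (s.restrictScalars S) ((Finsupp.linearCombination R id).restrictScalars S)
    (LinearMap.ext fun x => LinearMap.congr_fun hs x)

lemma projective_range_of_addEquiv {k B R M N : Type*} [CommRing k] [Ring B] [Algebra k B]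
    [Ring R] [Algebra k R] [AddCommGroup M] [Module B M] [AddCommGroup N] [Module R N]
    {φ : B →ₐ[k] R} (hφ : Function.Injective φ) (e : M ≃+ N)
    (he : ∀ b x, e (b • x) = φ b • e x) [Module.Projective B M] :
    Module.Projective φ.range N :=
  let σ := (AlgEquiv.ofInjective φ hφ).toRingEquiv
  have := RingHomInvPair.of_ringEquiv σ
  have := RingHomInvPair.symm (σ : B →+* φ.range) (σ.symm : φ.range →+* B)
  .of_equiv (σ := (σ : B →+* φ.range)) (σ' := σ.symm) { e with map_smul' := he }

lemma IsShortExact.projective_left {R M N L : Type u} [Ring R] [AddCommGroup M] [AddCommGroup N]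
    [AddCommGroup L] [Module R M] [Module R N] [Module R L] {f : M →ₗ[R] N} {g : N →ₗ[R] L}
    (h : IsShortExact f g) [Module.Projective R N] [Module.Projective R L] :
    Module.Projective R M := by
  obtain ⟨r, -, hrf, -⟩ := h.exists_splitting_of_projective
  exact .of_split f r hrf

end Projective

section Enveloping

/-- The enveloping algebra of `A`; its modules are the `A`-`A`-bimodules on which `k` acts
centrally. -/
abbrev Env (k : Type v) (A : Type u) [CommRing k] [Ring A] [Algebra k A] : Type u :=
  A ⊗[k] Aᵐᵒᵖ

namespace Env

variable (k : Type v) (A : Type u) [CommRing k] [Ring A] [Algebra k A]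

/-- The copy of `A` in its enveloping algebra whose action on a bimodule is the left action. -/
abbrev left : Subalgebra k (Env k A) :=
  (Algebra.TensorProduct.includeLeft : A →ₐ[k] Env k A).range

/-- The copy of `Aᵐᵒᵖ` in the enveloping algebra of `A` whose action on a bimodule is the right
action of `A`. -/
abbrev right : Subalgebra k (Env k A) :=
  (Algebra.TensorProduct.includeRight : Aᵐᵒᵖ →ₐ[k] Env k A).range

noncomputable instance : Module (Env k A) A := TensorProduct.Algebra.module

variable {A}

lemma tmul_smul_self (a : A) (b : Aᵐᵒᵖ) (x : A) : (a ⊗ₜ[k] b : Env k A) • x = a * x * b.unop :=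
  AlgHom.mulLeftRight_apply k A a b x

lemma tmul_one_smul_self (a x : A) : (a ⊗ₜ[k] 1 : Env k A) • x = a * x := by
  rw [tmul_smul_self, MulOpposite.unop_one, mul_one]

lemma one_tmul_smul_self (b : Aᵐᵒᵖ) (x : A) : ((1 : A) ⊗ₜ[k] b : Env k A) • x = x * b.unop := by
  rw [tmul_smul_self, one_mul]

instance : IsScalarTower k (Env k A) A where
  smul_assoc c r x := LinearMap.congr_fun (map_smul (AlgHom.mulLeftRight k A) c r) x

lemma includeLeft_injective :
    Function.Injective (Algebra.TensorProduct.includeLeft : A →ₐ[k] Env k A) := fun a b hab => by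
  have : (a ⊗ₜ[k] 1 : Env k A) • (1 : A) = (b ⊗ₜ[k] 1 : Env k A) • (1 : A) :=
    congrArg (· • (1 : A)) hab
  simpa only [tmul_one_smul_self, mul_one] using this

lemma includeRight_injective :
    Function.Injective (Algebra.TensorProduct.includeRight : Aᵐᵒᵖ →ₐ[k] Env k A) :=
  fun a b hab => by
    have : ((1 : A) ⊗ₜ[k] a : Env k A) • (1 : A) = ((1 : A) ⊗ₜ[k] b : Env k A) • (1 : A) :=
      congrArg (· • (1 : A)) hab
    simpa only [one_tmul_smul_self, one_mul, MulOpposite.unop_inj] using this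

instance projective_left_self : Module.Projective (left k A) A :=
  projective_range_of_addEquiv (includeLeft_injective k) (AddEquiv.refl A)
    fun a x => (tmul_one_smul_self k a x).symm

instance projective_right_self : Module.Projective (right k A) A :=
  projective_range_of_addEquiv (includeRight_injective k) MulOpposite.opAddEquiv.symm
    fun b _ => (one_tmul_smul_self k b _).symm

instance projective_left_env [Module.Projective k A] : Module.Projective (left k A) (Env k A) :=
  have : Module.Projective k Aᵐᵒᵖ := .of_equiv' (MulOpposite.opLinearEquiv k)
  projective_range_of_addEquiv (includeLeft_injective k) (AddEquiv.refl (A ⊗[k] Aᵐᵒᵖ)) fun a x => by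
    induction x with
    | zero => simp
    | tmul x y => simp [TensorProduct.smul_tmul']
    | add x y hx hy => rw [smul_add, map_add, hx, hy]; exact (mul_add _ _ _).symm

instance projective_right_env [Module.Projective k A] : Module.Projective (right k A) (Env k A) :=
  projective_range_of_addEquiv (includeRight_injective k)
    (TensorProduct.comm k Aᵐᵒᵖ A).toAddEquiv fun b x => by
    induction x with
    | zero => simp
    | tmul x y => simp [TensorProduct.smul_tmul']
    | add x y hx hy => rw [smul_add, map_add, map_add, hx, hy]; exact (mul_add _ _ _).symm

variable {k} {M N : Type*} [AddCommGroup M] [AddCommGroup N] [Module (Env k A) M]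
  [Module (Env k A) N]

instance : SMulCommClass (left k A) (right k A) M where
  smul_comm := by
    rintro ⟨_, a, rfl⟩ ⟨_, b, rfl⟩ m
    simp [Subalgebra.smul_def, smul_smul]

instance : SMulCommClass (right k A) (left k A) M := .symm _ _ _

lemma map_tmul_one_smul (f : M →ₗ[left k A] N) (a : A) (m : M) :
    f ((a ⊗ₜ[k] 1 : Env k A) • m) = (a ⊗ₜ[k] 1 : Env k A) • f m :=
  f.map_smul ⟨_, a, rfl⟩ m

lemma map_one_tmul_smul (f : M →ₗ[right k A] N) (b : Aᵐᵒᵖ) (m : M) :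
    f (((1 : A) ⊗ₜ[k] b : Env k A) • m) = ((1 : A) ⊗ₜ[k] b : Env k A) • f m :=
  f.map_smul ⟨_, b, rfl⟩ m

/-- An additive map commuting with pure tensors is linear over the enveloping algebra. -/
def linearMapOfTMul (f : M →+ N)
    (hf : ∀ a b x, f ((a ⊗ₜ[k] b : Env k A) • x) = (a ⊗ₜ[k] b : Env k A) • f x) :
    M →ₗ[Env k A] N where
  toFun := f
  map_add' := map_add f
  map_smul' r x := by
    induction r using TensorProduct.induction_on with
    | zero =>
      change f ((0 : Env k A) • x) = (0 : Env k A) • f x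
      rw [zero_smul (Env k A) x, zero_smul (Env k A) (f x), map_zero]
    | tmul a b => exact hf a b x
    | add r s hr hs => simp only [add_smul, map_add, hr, hs, RingHom.id_apply]

end Env

end Enveloping

section BimoduleTensor

variable (k : Type v) (A : Type u) [CommRing k] [Ring A] [Algebra k A]

/-- The tensor product `M ⊗_A N` of two `A`-`A`-bimodules, as the quotient of `M ⊗[k] N` by the
relations `m a ⊗ n = m ⊗ a n`. -/
def BimodTensor (M N : Type u) [AddCommGroup M] [AddCommGroup N] [Module k M] [Module k N]
    [Module (Env k A) M] [Module (Env k A) N] : Type u :=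
  (M ⊗[k] N) ⧸ Submodule.span k (Set.range fun t : A × M × N =>
    (((1 : A) ⊗ₜ[k] MulOpposite.op t.1 : Env k A) • t.2.1) ⊗ₜ[k] t.2.2 -
      t.2.1 ⊗ₜ[k] ((t.1 ⊗ₜ[k] 1 : Env k A) • t.2.2))

namespace BimodTensor

variable {M N M' N' M'' N'' : Type u} [AddCommGroup M] [AddCommGroup N]
  [AddCommGroup M'] [AddCommGroup N'] [AddCommGroup M''] [AddCommGroup N'']
  [Module k M] [Module k N] [Module k M'] [Module k N'] [Module k M''] [Module k N'']
  [Module (Env k A) M] [Module (Env k A) N] [Module (Env k A) M'] [Module (Env k A) N']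
  [Module (Env k A) M''] [Module (Env k A) N'']

noncomputable instance : AddCommGroup (BimodTensor k A M N) :=
  inferInstanceAs (AddCommGroup ((M ⊗[k] N) ⧸ Submodule.span k _))

noncomputable instance : Module k (BimodTensor k A M N) :=
  inferInstanceAs (Module k ((M ⊗[k] N) ⧸ Submodule.span k _))

variable (M N) in
/-- The universal `k`-bilinear `A`-balanced map `(m, n) ↦ m ⊗ n`. -/
noncomputable def mk : M →ₗ[k] N →ₗ[k] BimodTensor k A M N :=
  (TensorProduct.mk k M N).compr₂ (Submodule.mkQ _)

/-- The pure tensor `m ⊗ n` in `M ⊗_A N`. -/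
noncomputable abbrev tmul (m : M) (n : N) : BimodTensor k A M N := mk k A M N m n

lemma smul_tmul (a : A) (m : M) (n : N) :
    tmul k A (((1 : A) ⊗ₜ[k] MulOpposite.op a : Env k A) • m) n =
      tmul k A m ((a ⊗ₜ[k] 1 : Env k A) • n) :=
  (Submodule.Quotient.eq _).2 (Submodule.subset_span ⟨(a, m, n), rfl⟩)

@[elab_as_elim]
lemma induction_on {p : BimodTensor k A M N → Prop} (x : BimodTensor k A M N) (zero : p 0)
    (tmul : ∀ m n, p (tmul k A m n)) (add : ∀ x y, p x → p y → p (x + y)) : p x := by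
  obtain ⟨x, rfl⟩ := Submodule.mkQ_surjective _ x
  induction x with
  | zero => rwa [map_zero]
  | tmul m n => exact tmul m n
  | add x y hx hy => rw [map_add]; exact add _ _ hx hy

variable {k A} in
lemma linearMap_ext {X : Type*} [AddCommGroup X] [Module k X]
    {f g : BimodTensor k A M N →ₗ[k] X}
    (h : ∀ m n, f (tmul k A m n) = g (tmul k A m n)) : f = g := by
  ext x
  induction x using induction_on with
  | zero => rw [map_zero, map_zero]
  | tmul m n => exact h m n
  | add x y hx hy => rw [map_add, map_add, hx, hy]

variable {k A} in
/-- The `k`-linear map out of `M ⊗_A N` induced by an `A`-balanced `k`-bilinear map. -/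
noncomputable def lift {X : Type*} [AddCommGroup X] [Module k X] (f : M →ₗ[k] N →ₗ[k] X)
    (hf : ∀ (a : A) m n, f (((1 : A) ⊗ₜ[k] MulOpposite.op a : Env k A) • m) n =
      f m ((a ⊗ₜ[k] 1 : Env k A) • n)) : BimodTensor k A M N →ₗ[k] X :=
  Submodule.liftQ _ (TensorProduct.lift f) <| Submodule.span_le.2 <| by
    rintro _ ⟨⟨a, m, n⟩, rfl⟩
    simp [hf]

lemma lift_tmul {X : Type*} [AddCommGroup X] [Module k X] (f : M →ₗ[k] N →ₗ[k] X)
    (hf : ∀ (a : A) m n, f (((1 : A) ⊗ₜ[k] MulOpposite.op a : Env k A) • m) n =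
      f m ((a ⊗ₜ[k] 1 : Env k A) • n)) (m : M) (n : N) : lift f hf (tmul k A m n) = f m n :=
  TensorProduct.lift.tmul m n

variable [IsScalarTower k (Env k A) M] [IsScalarTower k (Env k A) N]
  [IsScalarTower k (Env k A) M'] [IsScalarTower k (Env k A) N']
  [IsScalarTower k (Env k A) M''] [IsScalarTower k (Env k A) N'']

section map

variable {k A}

/-- The map `f ⊗ g` induced by a right-linear map `f` and a left-linear map `g`. -/
noncomputable def map (f : M →ₗ[Env.right k A] M') (g : N →ₗ[Env.left k A] N') :
    BimodTensor k A M N →ₗ[k] BimodTensor k A M' N' :=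
  lift ((mk k A M' N').compl₁₂ (f.restrictScalars k) (g.restrictScalars k)) fun a m n => by
    simp only [LinearMap.compl₁₂_apply, LinearMap.restrictScalars_apply,
      Env.map_one_tmul_smul, Env.map_tmul_one_smul, smul_tmul]

@[simp]
lemma map_tmul (f : M →ₗ[Env.right k A] M') (g : N →ₗ[Env.left k A] N') (m : M) (n : N) :
    map f g (tmul k A m n) = tmul k A (f m) (g n) :=
  lift_tmul k A _ _ m n

lemma map_id : map (LinearMap.id : M →ₗ[Env.right k A] M) (LinearMap.id : N →ₗ[Env.left k A] N) =
    LinearMap.id :=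
  linearMap_ext fun _ _ => map_tmul _ _ _ _

lemma map_map (f : M →ₗ[Env.right k A] M') (g : N →ₗ[Env.left k A] N')
    (f' : M' →ₗ[Env.right k A] M'') (g' : N' →ₗ[Env.left k A] N'') (x : BimodTensor k A M N) :
    map f' g' (map f g x) = map (f' ∘ₗ f) (g' ∘ₗ g) x :=
  LinearMap.congr_fun (f := map f' g' ∘ₗ map f g) (linearMap_ext fun _ _ => by simp) x

lemma map_add_left (f f' : M →ₗ[Env.right k A] M') (g : N →ₗ[Env.left k A] N') :
    map (f + f') g = map f g + map f' g :=
  linearMap_ext fun _ _ => by simp [LinearMap.map_add₂]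

lemma map_add_right (f : M →ₗ[Env.right k A] M') (g g' : N →ₗ[Env.left k A] N') :
    map f (g + g') = map f g + map f g' :=
  linearMap_ext fun _ _ => by simp

variable (k A M N) in
/-- Functoriality of `M ⊗_A N` in `M`, as a homomorphism of endomorphism algebras. -/
noncomputable def endLeft : Module.End (Env.right k A) M →ₐ[k] Module.End k (BimodTensor k A M N) :=
  AlgHom.ofLinearMap
    { toFun := fun f => map f LinearMap.id
      map_add' := fun f g => map_add_left f g _
      map_smul' := fun c f => linearMap_ext fun m n => by simp [LinearMap.map_smul₂] }
    map_id (fun f g => linearMap_ext fun m n => by simp)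

variable (k A M N) in
/-- Functoriality of `M ⊗_A N` in `N`, as a homomorphism of endomorphism algebras. -/
noncomputable def endRight : Module.End (Env.left k A) N →ₐ[k] Module.End k (BimodTensor k A M N) :=
  AlgHom.ofLinearMap
    { toFun := fun f => map LinearMap.id f
      map_add' := fun f g => map_add_right _ f g
      map_smul' := fun c f => linearMap_ext fun m n => by simp }
    map_id (fun f g => linearMap_ext fun m n => by simp)

lemma endLeft_tmul (f : Module.End (Env.right k A) M) (m : M) (n : N) :
    endLeft k A M N f (tmul k A m n) = tmul k A (f m) n :=
  map_tmul _ _ _ _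

lemma endRight_tmul (f : Module.End (Env.left k A) N) (m : M) (n : N) :
    endRight k A M N f (tmul k A m n) = tmul k A m (f n) :=
  map_tmul _ _ _ _

lemma commute_endLeft_endRight (f : Module.End (Env.right k A) M)
    (g : Module.End (Env.left k A) N) : Commute (endLeft k A M N f) (endRight k A M N g) :=
  linearMap_ext fun m n => by simp only [Module.End.mul_apply, endLeft_tmul, endRight_tmul]

variable (k A M N) in
/-- The outer bimodule structure of `M ⊗_A N`: the left action on `M` and the right action
on `N`. -/
noncomputable def outerAction : Env k A →ₐ[k] Module.End k (BimodTensor k A M N) :=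
  Algebra.TensorProduct.lift
    ((endLeft k A M N).comp ((Algebra.lsmul k (A := Env.left k A) (Env.right k A) M).comp
      (AlgHom.rangeRestrict Algebra.TensorProduct.includeLeft)))
    ((endRight k A M N).comp ((Algebra.lsmul k (A := Env.right k A) (Env.left k A) N).comp
      (AlgHom.rangeRestrict Algebra.TensorProduct.includeRight)))
    fun _ _ => commute_endLeft_endRight _ _

end map

section outer

variable {k A}

noncomputable instance : Module (Env k A) (BimodTensor k A M N) :=
  Module.compHom _ (outerAction k A M N).toRingHom

instance : IsScalarTower k (Env k A) (BimodTensor k A M N) where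
  smul_assoc c r x := LinearMap.congr_fun (map_smul (outerAction k A M N) c r) x

lemma tmul_smul_tmul (a : A) (b : Aᵐᵒᵖ) (m : M) (n : N) :
    (a ⊗ₜ[k] b : Env k A) • tmul k A m n =
      tmul k A ((a ⊗ₜ[k] 1 : Env k A) • m) (((1 : A) ⊗ₜ[k] b : Env k A) • n) := by
  have hab : outerAction k A M N (a ⊗ₜ[k] b) =
      endLeft k A M N _ * endRight k A M N _ := Algebra.TensorProduct.lift_tmul _ _ _ a b
  calc
    _ = outerAction k A M N (a ⊗ₜ[k] b) (tmul k A m n) := rfl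
    _ = _ := by rw [hab, Module.End.mul_apply, endRight_tmul, endLeft_tmul]; rfl

/-- The bimodule map `f ⊗ g` induced by bimodule maps `f` and `g`. -/
noncomputable def bimodMap (f : M →ₗ[Env k A] M') (g : N →ₗ[Env k A] N') :
    BimodTensor k A M N →ₗ[Env k A] BimodTensor k A M' N' :=
  Env.linearMapOfTMul
    (map (f.restrictScalars (Env.right k A)) (g.restrictScalars (Env.left k A))).toAddMonoidHom
    fun a b x => by
      induction x using induction_on with
      | zero => rw [smul_zero, map_zero, smul_zero]
      | tmul m n =>
        simp only [LinearMap.toAddMonoidHom_coe, tmul_smul_tmul, map_tmul,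
          LinearMap.restrictScalars_apply, LinearMap.map_smul]
      | add x y hx hy => rw [smul_add, map_add, hx, hy, map_add, smul_add]

@[simp]
lemma bimodMap_tmul (f : M →ₗ[Env k A] M') (g : N →ₗ[Env k A] N') (m : M) (n : N) :
    bimodMap f g (tmul k A m n) = tmul k A (f m) (g n) :=
  map_tmul _ _ m n

lemma bimodMap_comm (f : M →ₗ[Env k A] M') (g : N →ₗ[Env k A] N') (x : BimodTensor k A M N) :
    bimodMap f LinearMap.id (bimodMap LinearMap.id g x) =
      bimodMap LinearMap.id g (bimodMap f LinearMap.id x) := by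
  induction x using induction_on with
  | zero => simp
  | tmul m n => simp
  | add x y hx hy => simp only [map_add, hx, hy]

end outer

section exact

variable {k A}

lemma isShortExact_bimodMap_id_right {f : M →ₗ[Env k A] M'} {g : M' →ₗ[Env k A] M''}
    (h : IsShortExact f g) [Module.Projective (Env.right k A) M''] :
    IsShortExact (bimodMap f (LinearMap.id : N →ₗ[Env k A] N)) (bimodMap g LinearMap.id) := by
  obtain ⟨r, s, hrf, hgs, hsum⟩ :=
    (h.restrictScalars (Env.right k A)).exists_splitting_of_projective
  refine .of_splitting (map r LinearMap.id).toAddMonoidHom (map s LinearMap.id).toAddMonoidHom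
    (fun x => ?_) (fun x => ?_) (fun x => ?_)
  · exact (map_map _ _ _ _ x).trans (by rw [hrf]; exact LinearMap.congr_fun map_id x)
  · exact (map_map _ _ _ _ x).trans (by rw [hgs]; exact LinearMap.congr_fun map_id x)
  · refine (congrArg₂ (· + ·) (map_map _ _ _ _ x) (map_map _ _ _ _ x)).trans ?_
    refine (LinearMap.congr_fun (map_add_left _ _ LinearMap.id) x).symm.trans ?_
    rw [hsum]
    exact LinearMap.congr_fun map_id x

lemma isShortExact_bimodMap_id_left {f : N →ₗ[Env k A] N'} {g : N' →ₗ[Env k A] N''}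
    (h : IsShortExact f g) [Module.Projective (Env.left k A) N''] :
    IsShortExact (bimodMap (LinearMap.id : M →ₗ[Env k A] M) f) (bimodMap LinearMap.id g) := by
  obtain ⟨r, s, hrf, hgs, hsum⟩ :=
    (h.restrictScalars (Env.left k A)).exists_splitting_of_projective
  refine .of_splitting (map LinearMap.id r).toAddMonoidHom (map LinearMap.id s).toAddMonoidHom
    (fun x => ?_) (fun x => ?_) (fun x => ?_)
  · exact (map_map _ _ _ _ x).trans (by rw [hrf]; exact LinearMap.congr_fun map_id x)
  · exact (map_map _ _ _ _ x).trans (by rw [hgs]; exact LinearMap.congr_fun map_id x)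
  · refine (congrArg₂ (· + ·) (map_map _ _ _ _ x) (map_map _ _ _ _ x)).trans ?_
    refine (LinearMap.congr_fun (map_add_right LinearMap.id _ _) x).symm.trans ?_
    rw [hsum]
    exact LinearMap.congr_fun map_id x

end exact

end BimodTensor

end BimoduleTensor

section Unitors

namespace Env

variable {k : Type v} {A : Type u} [CommRing k] [Ring A] [Algebra k A]
  {M : Type*} [AddCommGroup M] [Module (Env k A) M]

lemma tmul_one_smul_map_one (u : A →ₗ[Env k A] M) (a : A) :
    (a ⊗ₜ[k] 1 : Env k A) • u 1 = u a := by
  rw [← map_smul, tmul_one_smul_self, mul_one]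

lemma one_tmul_smul_map_one (u : A →ₗ[Env k A] M) (b : Aᵐᵒᵖ) :
    ((1 : A) ⊗ₜ[k] b : Env k A) • u 1 = u b.unop := by
  rw [← map_smul, one_tmul_smul_self, one_mul]

lemma tmul_smul_eq_left_smul_right_smul (a : A) (b : Aᵐᵒᵖ) (m : M) :
    (a ⊗ₜ[k] b : Env k A) • m =
      (a ⊗ₜ[k] 1 : Env k A) • ((1 : A) ⊗ₜ[k] b : Env k A) • m := by
  rw [smul_smul, Algebra.TensorProduct.tmul_mul_tmul, mul_one, one_mul]

lemma tmul_smul_eq_right_smul_left_smul (a : A) (b : Aᵐᵒᵖ) (m : M) :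
    (a ⊗ₜ[k] b : Env k A) • m =
      ((1 : A) ⊗ₜ[k] b : Env k A) • (a ⊗ₜ[k] 1 : Env k A) • m := by
  rw [smul_smul, Algebra.TensorProduct.tmul_mul_tmul, mul_one, one_mul]

end Env

namespace BimodTensor

variable {k : Type v} {A : Type u} [CommRing k] [Ring A] [Algebra k A]
  {M N M' N' : Type u} [AddCommGroup M] [AddCommGroup N] [AddCommGroup M'] [AddCommGroup N']
  [Module k M] [Module k N] [Module k M'] [Module k N']
  [Module (Env k A) M] [Module (Env k A) N] [Module (Env k A) M'] [Module (Env k A) N']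
  [IsScalarTower k (Env k A) M] [IsScalarTower k (Env k A) N] [IsScalarTower k (Env k A) M']
  [IsScalarTower k (Env k A) N']

/-- The bimodule map `N ≅ A ⊗_A N → M ⊗_A N` induced by `u : A → M`. -/
noncomputable def leftUnit (u : A →ₗ[Env k A] M) : N →ₗ[Env k A] BimodTensor k A M N :=
  Env.linearMapOfTMul (mk k A M N (u 1)).toAddMonoidHom fun a b n => by
    change tmul k A (u 1) ((a ⊗ₜ[k] b : Env k A) • n) = (a ⊗ₜ[k] b : Env k A) • tmul k A (u 1) n
    rw [Env.tmul_smul_eq_left_smul_right_smul, ← smul_tmul, tmul_smul_tmul,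
      Env.one_tmul_smul_map_one, Env.tmul_one_smul_map_one, MulOpposite.unop_op]

lemma leftUnit_apply (u : A →ₗ[Env k A] M) (n : N) : leftUnit u n = tmul k A (u 1) n := rfl

/-- The bimodule map `M ≅ M ⊗_A A → M ⊗_A N` induced by `u : A → N`. -/
noncomputable def rightUnit (u : A →ₗ[Env k A] N) : M →ₗ[Env k A] BimodTensor k A M N :=
  Env.linearMapOfTMul ((mk k A M N).flip (u 1)).toAddMonoidHom fun a b m => by
    change tmul k A ((a ⊗ₜ[k] b : Env k A) • m) (u 1) = (a ⊗ₜ[k] b : Env k A) • tmul k A m (u 1)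
    rw [Env.tmul_smul_eq_right_smul_left_smul, ← MulOpposite.op_unop b, smul_tmul, tmul_smul_tmul,
      Env.one_tmul_smul_map_one, Env.tmul_one_smul_map_one, MulOpposite.unop_op]

lemma rightUnit_apply (u : A →ₗ[Env k A] N) (m : M) : rightUnit u m = tmul k A m (u 1) := rfl

lemma leftUnit_comp_eq_rightUnit_comp (u : A →ₗ[Env k A] M) (v : A →ₗ[Env k A] N) :
    leftUnit u ∘ₗ v = rightUnit v ∘ₗ u := by
  ext a
  rw [LinearMap.comp_apply, LinearMap.comp_apply, leftUnit_apply, rightUnit_apply,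
    ← Env.tmul_one_smul_map_one v, ← smul_tmul, Env.one_tmul_smul_map_one, MulOpposite.unop_op]

lemma bimodMap_id_leftUnit (u : A →ₗ[Env k A] M) (g : N →ₗ[Env k A] N') (n : N) :
    bimodMap LinearMap.id g (leftUnit u n) = leftUnit u (g n) :=
  bimodMap_tmul _ _ _ _

lemma bimodMap_id_rightUnit (u : A →ₗ[Env k A] N) (f : M →ₗ[Env k A] M') (m : M) :
    bimodMap f LinearMap.id (rightUnit u m) = rightUnit u (f m) :=
  bimodMap_tmul _ _ _ _

/-- The `k`-bilinear map `(m, n) ↦ m v(n)`. -/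
noncomputable def smulRight (v : N →ₗ[Env k A] A) : M →ₗ[k] N →ₗ[k] M :=
  LinearMap.mk₂ k (fun m n => ((1 : A) ⊗ₜ[k] MulOpposite.op (v n) : Env k A) • m)
    (fun _ _ _ => smul_add _ _ _) (fun _ _ _ => smul_comm _ _ _)
    (fun m n n' => by rw [map_add, MulOpposite.op_add, TensorProduct.tmul_add, add_smul])
    (fun c m n => by
      rw [v.map_smul_of_tower, MulOpposite.op_smul, TensorProduct.tmul_smul, smul_assoc])

lemma smulRight_smul (v : N →ₗ[Env k A] A) (a : A) (m : M) (n : N) :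
    smulRight v (((1 : A) ⊗ₜ[k] MulOpposite.op a : Env k A) • m) n =
      smulRight v m ((a ⊗ₜ[k] 1 : Env k A) • n) := by
  simp only [smulRight, LinearMap.mk₂_apply, map_smul, Env.tmul_one_smul_self, smul_smul,
    Algebra.TensorProduct.tmul_mul_tmul, mul_one, MulOpposite.op_mul]

/-- The bimodule map `M ⊗_A N → M ⊗_A A ≅ M` induced by `v : N → A`. -/
noncomputable def contractRight (v : N →ₗ[Env k A] A) : BimodTensor k A M N →ₗ[Env k A] M :=
  Env.linearMapOfTMul (lift (smulRight v) (smulRight_smul v)).toAddMonoidHom fun a b x => by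
    induction x using induction_on with
    | zero => rw [smul_zero, map_zero, smul_zero]
    | tmul m n =>
      rw [tmul_smul_tmul]
      simp only [LinearMap.toAddMonoidHom_coe, lift_tmul, smulRight, LinearMap.mk₂_apply,
        map_smul, Env.one_tmul_smul_self, smul_smul, Algebra.TensorProduct.tmul_mul_tmul,
        mul_one, one_mul, MulOpposite.op_mul, MulOpposite.op_unop]
    | add x y hx hy => rw [smul_add, map_add, hx, hy, map_add, smul_add]

lemma contractRight_tmul (v : N →ₗ[Env k A] A) (m : M) (n : N) :
    contractRight v (tmul k A m n) = ((1 : A) ⊗ₜ[k] MulOpposite.op (v n) : Env k A) • m :=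
  lift_tmul k A (smulRight v) (smulRight_smul v) m n

lemma contractRight_comp_rightUnit {u : A →ₗ[Env k A] N} {v : N →ₗ[Env k A] A}
    (huv : v (u 1) = 1) :
    contractRight v ∘ₗ rightUnit u = (LinearMap.id : M →ₗ[Env k A] M) := by
  ext m
  rw [LinearMap.comp_apply, rightUnit_apply, contractRight_tmul, huv, MulOpposite.op_one]
  exact one_smul (Env k A) m

end BimodTensor

end Unitors

section Splice

variable {R : Type u} [Ring R] {n : ℕ} {Z Q Z' Q' : ℕ → Type u}
  [∀ i, AddCommGroup (Z i)] [∀ i, AddCommGroup (Q i)]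
  [∀ i, AddCommGroup (Z' i)] [∀ i, AddCommGroup (Q' i)]
  [∀ i, Module R (Z i)] [∀ i, Module R (Q i)] [∀ i, Module R (Z' i)] [∀ i, Module R (Q' i)]
  {f : ∀ i, Z (i + 1) →ₗ[R] Q i} {g : ∀ i, Q i →ₗ[R] Z i}
  {f' : ∀ i, Z' (i + 1) →ₗ[R] Q' i} {g' : ∀ i, Q' i →ₗ[R] Z' i}

/-- The Yoneda class in `Extⁿ(Z₀, Zₙ)` of the exact sequence
`0 → Zₙ → Qₙ₋₁ → ⋯ → Q₀ → Z₀ → 0` spliced from short exact sequences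
`0 → Zᵢ₊₁ → Qᵢ → Zᵢ → 0`. -/
noncomputable def spliceClass (h : ∀ i < n, IsShortExact (f i) (g i)) :
    Ext (ModuleCat.of R (Z 0)) (ModuleCat.of R (Z n)) n :=
  yonedaProd (T := fun i => ModuleCat.of R (Z i)) n fun i hi => (h i hi).extClass

lemma spliceClass_comp_eq_comp_spliceClass (h : ∀ i < n, IsShortExact (f i) (g i))
    (h' : ∀ i < n, IsShortExact (f' i) (g' i)) (l : ∀ i, Z i →ₗ[R] Z' i) (m : ∀ i, Q i →ₗ[R] Q' i)
    (hf : ∀ i x, f' i (l (i + 1) x) = m i (f i x)) (hg : ∀ i x, g' i (m i x) = l i (g i x)) :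
    (spliceClass h).comp (extOfLinearMap (l n)) (add_zero n) =
      (extOfLinearMap (l 0)).comp (spliceClass h') (zero_add n) :=
  yonedaProd_comp_eq_comp_yonedaProd _ _ (fun i => extOfLinearMap (l i)) fun i hi =>
    (h i hi).extClass_naturality (h' i hi) _ _ _ (hf i) (hg i)

lemma eq_zero_of_spliceClass_comp_eq_zero (h : ∀ i < n, IsShortExact (f i) (g i))
    (hQ : ∀ i < n, Module.Projective R (Q i)) {Y : ModuleCat.{u} R} {p q : ℕ}
    (hpq : n + (p + 1) = q) (z : Ext (ModuleCat.of R (Z n)) Y (p + 1))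
    (hz : (spliceClass h).comp z hpq = 0) : z = 0 :=
  eq_zero_of_yonedaProd_comp_eq_zero (T := fun i => ModuleCat.of R (Z i)) _
    (fun i hi _ _ hlm z hz =>
      have := hQ i hi
      (h i hi).eq_zero_of_extClass_comp_eq_zero hlm z hz) hpq z hz

lemma exists_extension_of_spliceClass_comp_eq_zero
    (h : ∀ i < n + 1, IsShortExact (f i) (g i)) (hQ : ∀ i < n, Module.Projective R (Q i))
    {M : Type u} [AddCommGroup M] [Module R M] (φ : Z (n + 1) →ₗ[R] M)
    (hφ : (spliceClass h).comp (extOfLinearMap φ) (add_zero (n + 1)) = 0) :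
    ∃ ψ : Q n →ₗ[R] M, ψ ∘ₗ f n = φ := by
  refine (h n n.lt_succ_self).exists_extension_of_extClass_comp_eq_zero φ ?_
  refine eq_zero_of_spliceClass_comp_eq_zero (fun i hi => h i (hi.trans n.lt_succ_self)) hQ rfl _ ?_
  rw [← Ext.comp_assoc_of_third_deg_zero]
  exact hφ

end Splice

section GradedCommutativity

namespace BimodTensor

variable {k : Type v} {A : Type u} [CommRing k] [Ring A] [Algebra k A]

section

variable {p q : ℕ} {Z Q Z' Q' : ℕ → Type u}
  [∀ i, AddCommGroup (Z i)] [∀ i, AddCommGroup (Q i)]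
  [∀ i, AddCommGroup (Z' i)] [∀ i, AddCommGroup (Q' i)]
  [∀ i, Module k (Z i)] [∀ i, Module k (Q i)] [∀ i, Module k (Z' i)] [∀ i, Module k (Q' i)]
  [∀ i, Module (Env k A) (Z i)] [∀ i, Module (Env k A) (Q i)]
  [∀ i, Module (Env k A) (Z' i)] [∀ i, Module (Env k A) (Q' i)]
  [∀ i, IsScalarTower k (Env k A) (Z i)] [∀ i, IsScalarTower k (Env k A) (Q i)]
  [∀ i, IsScalarTower k (Env k A) (Z' i)] [∀ i, IsScalarTower k (Env k A) (Q' i)]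
  {f : ∀ i, Z (i + 1) →ₗ[Env k A] Q i} {g : ∀ i, Q i →ₗ[Env k A] Z i}
  {f' : ∀ i, Z' (i + 1) →ₗ[Env k A] Q' i} {g' : ∀ i, Q' i →ₗ[Env k A] Z' i}
  (M N : Type u) [AddCommGroup M] [Module k M] [Module (Env k A) M] [IsScalarTower k (Env k A) M]
  [AddCommGroup N] [Module k N] [Module (Env k A) N] [IsScalarTower k (Env k A) N]

/-- The class `ζ ⊗_A N` of the splice of the sequences
`0 → Zᵢ₊₁ ⊗_A N → Qᵢ ⊗_A N → Zᵢ ⊗_A N → 0`. -/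
noncomputable def spliceClassTensor (h : ∀ i < p, IsShortExact (f i) (g i))
    (hZ : ∀ i < p, Module.Projective (Env.right k A) (Z i)) :
    Ext (ModuleCat.of (Env k A) (BimodTensor k A (Z 0) N))
      (ModuleCat.of (Env k A) (BimodTensor k A (Z p) N)) p :=
  spliceClass (Z := fun i => BimodTensor k A (Z i) N) (Q := fun i => BimodTensor k A (Q i) N)
    (f := fun i => bimodMap (f i) LinearMap.id) (g := fun i => bimodMap (g i) LinearMap.id)
    fun i hi => have := hZ i hi; isShortExact_bimodMap_id_right (h i hi)

/-- The class `M ⊗_A ζ` of the splice of the sequences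
`0 → M ⊗_A Zᵢ₊₁ → M ⊗_A Qᵢ → M ⊗_A Zᵢ → 0`. -/
noncomputable def tensorSpliceClass (h : ∀ i < p, IsShortExact (f i) (g i))
    (hZ : ∀ i < p, Module.Projective (Env.left k A) (Z i)) :
    Ext (ModuleCat.of (Env k A) (BimodTensor k A M (Z 0)))
      (ModuleCat.of (Env k A) (BimodTensor k A M (Z p))) p :=
  spliceClass (Z := fun i => BimodTensor k A M (Z i)) (Q := fun i => BimodTensor k A M (Q i))
    (f := fun i => bimodMap LinearMap.id (f i)) (g := fun i => bimodMap LinearMap.id (g i))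
    fun i hi => have := hZ i hi; isShortExact_bimodMap_id_left (h i hi)

variable {M N}

lemma spliceClass_comp_rightUnit (h : ∀ i < p, IsShortExact (f i) (g i))
    (hZ : ∀ i < p, Module.Projective (Env.right k A) (Z i)) (u : A →ₗ[Env k A] N) :
    (spliceClass h).comp (extOfLinearMap (rightUnit u)) (add_zero p) =
      (extOfLinearMap (rightUnit u)).comp (spliceClassTensor N h hZ) (zero_add p) :=
  spliceClass_comp_eq_comp_spliceClass h _ (fun _ => rightUnit u) (fun _ => rightUnit u)
    (fun i => bimodMap_id_rightUnit u (f i)) (fun i => bimodMap_id_rightUnit u (g i))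

lemma spliceClass_comp_leftUnit (h : ∀ i < p, IsShortExact (f i) (g i))
    (hZ : ∀ i < p, Module.Projective (Env.left k A) (Z i)) (u : A →ₗ[Env k A] M) :
    (spliceClass h).comp (extOfLinearMap (leftUnit u)) (add_zero p) =
      (extOfLinearMap (leftUnit u)).comp (tensorSpliceClass M h hZ) (zero_add p) :=
  spliceClass_comp_eq_comp_spliceClass h _ (fun _ => leftUnit u) (fun _ => leftUnit u)
    (fun i => bimodMap_id_leftUnit u (f i)) (fun i => bimodMap_id_leftUnit u (g i))

lemma tensorSpliceClass_comp_spliceClassTensor (h : ∀ i < p, IsShortExact (f i) (g i))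
    (hZ : ∀ i < p, Module.Projective (Env.right k A) (Z i))
    (h' : ∀ j < q, IsShortExact (f' j) (g' j))
    (hZ' : ∀ j < q, Module.Projective (Env.left k A) (Z' j)) :
    (tensorSpliceClass (Z 0) h' hZ').comp (spliceClassTensor (Z' q) h hZ) (add_comm q p) =
      (-1 : ℤ) ^ (p * q) •
        (spliceClassTensor (Z' 0) h hZ).comp (tensorSpliceClass (Z p) h' hZ') rfl :=
  yonedaProd_comp_yonedaProd_of_anticommute
    (T := fun i j => ModuleCat.of (Env k A) (BimodTensor k A (Z i) (Z' j)))
    (fun i hi j => have := hZ i hi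
      (isShortExact_bimodMap_id_right (N := Z' j) (h i hi)).extClass)
    (fun j hj i => have := hZ' j hj
      (isShortExact_bimodMap_id_left (M := Z i) (h' j hj)).extClass)
    (fun i hi j hj =>
      have := hZ i hi
      have := hZ' j hj
      extClass_comp_extClass_eq_neg (isShortExact_bimodMap_id_left (h' j hj))
        (isShortExact_bimodMap_id_left (M := Q i) (h' j hj)).exact
        (isShortExact_bimodMap_id_left (h' j hj)) (isShortExact_bimodMap_id_right (h i hi))
        (isShortExact_bimodMap_id_right (h i hi)) (isShortExact_bimodMap_id_right (h i hi))
        (bimodMap_comm _ _) (bimodMap_comm _ _) (bimodMap_comm _ _) (bimodMap_comm _ _))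
    _ _

lemma rightUnit_comp_comp_symm (u : A →ₗ[Env k A] M) (e : A ≃ₗ[Env k A] N) :
    rightUnit e.toLinearMap ∘ₗ u ∘ₗ e.symm.toLinearMap = leftUnit u := by
  rw [← LinearMap.comp_assoc, ← leftUnit_comp_eq_rightUnit_comp, LinearMap.comp_assoc,
    e.comp_symm, LinearMap.comp_id]

lemma leftUnit_comp_comp_symm (e : A ≃ₗ[Env k A] M) (u : A →ₗ[Env k A] N) :
    leftUnit e.toLinearMap ∘ₗ u ∘ₗ e.symm.toLinearMap = rightUnit u := by
  rw [← LinearMap.comp_assoc, leftUnit_comp_eq_rightUnit_comp, LinearMap.comp_assoc,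
    e.comp_symm, LinearMap.comp_id]

lemma leftUnit_eq_rightUnit (e : A ≃ₗ[Env k A] M) :
    leftUnit e.toLinearMap = rightUnit (M := M) e.toLinearMap := by
  rw [← leftUnit_comp_comp_symm e, e.comp_symm, LinearMap.comp_id]

lemma spliceClass_comp_spliceClass_comp_rightUnit (h : ∀ i < p, IsShortExact (f i) (g i))
    (hZ : ∀ i < p, Module.Projective (Env.right k A) (Z i))
    (h' : ∀ j < q, IsShortExact (f' j) (g' j))
    (hZ' : ∀ j < q, Module.Projective (Env.left k A) (Z' j))
    (u : A →ₗ[Env k A] Z 0) (e : A ≃ₗ[Env k A] Z' q) :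
    (((spliceClass h').comp (extOfLinearMap (u ∘ₗ e.symm.toLinearMap)) (add_zero q)).comp
      (spliceClass h) (add_comm q p)).comp (extOfLinearMap (rightUnit e.toLinearMap))
        (add_zero (p + q)) =
      (extOfLinearMap (leftUnit u)).comp ((tensorSpliceClass (Z 0) h' hZ').comp
        (spliceClassTensor (Z' q) h hZ) (add_comm q p)) (zero_add (p + q)) := by
  rw [Ext.comp_assoc_of_third_deg_zero, spliceClass_comp_rightUnit h hZ,
    ← Ext.comp_assoc_of_second_deg_zero, Ext.comp_assoc_of_third_deg_zero, extOfLinearMap_comp,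
    rightUnit_comp_comp_symm, spliceClass_comp_leftUnit h' hZ',
    Ext.comp_assoc _ _ _ _ _ (by omega)]

lemma spliceClass_comp_spliceClass_comp_leftUnit (h : ∀ i < p, IsShortExact (f i) (g i))
    (hZ : ∀ i < p, Module.Projective (Env.right k A) (Z i))
    (h' : ∀ j < q, IsShortExact (f' j) (g' j))
    (hZ' : ∀ j < q, Module.Projective (Env.left k A) (Z' j))
    (e : A ≃ₗ[Env k A] Z p) (u : A →ₗ[Env k A] Z' 0) :
    (((spliceClass h).comp (extOfLinearMap (u ∘ₗ e.symm.toLinearMap)) (add_zero p)).comp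
      (spliceClass h') rfl).comp (extOfLinearMap (leftUnit e.toLinearMap))
        (add_zero (p + q)) =
      (extOfLinearMap (rightUnit u)).comp ((spliceClassTensor (Z' 0) h hZ).comp
        (tensorSpliceClass (Z p) h' hZ') rfl) (zero_add (p + q)) := by
  rw [Ext.comp_assoc_of_third_deg_zero, spliceClass_comp_leftUnit h' hZ',
    ← Ext.comp_assoc_of_second_deg_zero, Ext.comp_assoc_of_third_deg_zero, extOfLinearMap_comp,
    leftUnit_comp_comp_symm, spliceClass_comp_rightUnit h hZ,
    Ext.comp_assoc _ _ _ _ _ (by omega)]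

lemma eq_of_comp_rightUnit_eq {X : ModuleCat.{u} (Env k A)} {m : ℕ} (e : A ≃ₗ[Env k A] N)
    {x y : Ext X (ModuleCat.of (Env k A) M) m}
    (hxy : x.comp (extOfLinearMap (rightUnit e.toLinearMap)) (add_zero m) =
      y.comp (extOfLinearMap (rightUnit e.toLinearMap)) (add_zero m)) : x = y := by
  have hr : contractRight e.symm.toLinearMap ∘ₗ rightUnit e.toLinearMap =
      (LinearMap.id : M →ₗ[Env k A] M) := contractRight_comp_rightUnit (e.symm_apply_apply 1)
  rw [← comp_extOfLinearMap_id x, ← comp_extOfLinearMap_id y, ← hr, ← extOfLinearMap_comp,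
    ← Ext.comp_assoc_of_third_deg_zero, hxy, Ext.comp_assoc_of_third_deg_zero]

lemma spliceClass_sq_eq_neg_one_pow_smul (h : ∀ i < p, IsShortExact (f i) (g i))
    (hZl : ∀ i < p, Module.Projective (Env.left k A) (Z i))
    (hZr : ∀ i < p, Module.Projective (Env.right k A) (Z i))
    (e₀ : A ≃ₗ[Env k A] Z 0) (eₚ : A ≃ₗ[Env k A] Z p) :
    ((spliceClass h).comp (extOfLinearMap (e₀.toLinearMap ∘ₗ eₚ.symm.toLinearMap))
      (add_zero p)).comp (spliceClass h) rfl =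
    (-1 : ℤ) ^ (p * p) • ((spliceClass h).comp
      (extOfLinearMap (e₀.toLinearMap ∘ₗ eₚ.symm.toLinearMap)) (add_zero p)).comp
        (spliceClass h) rfl := by
  apply eq_of_comp_rightUnit_eq eₚ
  rw [spliceClass_comp_spliceClass_comp_rightUnit h hZr h hZl,
    tensorSpliceClass_comp_spliceClassTensor, ext_comp_zsmul, leftUnit_eq_rightUnit e₀,
    ← spliceClass_comp_spliceClass_comp_leftUnit, leftUnit_eq_rightUnit eₚ, ext_zsmul_comp]

lemma spliceClass_add_self_eq_zero (hp : Odd p) (h : ∀ i < p, IsShortExact (f i) (g i))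
    (hZl : ∀ i < p, Module.Projective (Env.left k A) (Z i))
    (hZr : ∀ i < p, Module.Projective (Env.right k A) (Z i))
    (hQ : ∀ i < p, Module.Projective (Env k A) (Q i))
    (e₀ : A ≃ₗ[Env k A] Z 0) (eₚ : A ≃ₗ[Env k A] Z p) :
    spliceClass h + spliceClass h = 0 := by
  obtain ⟨m, rfl⟩ : ∃ m, p = m + 1 := ⟨p - 1, by have := hp.pos; omega⟩
  have hsq := spliceClass_sq_eq_neg_one_pow_smul h hZl hZr e₀ eₚ
  rw [(hp.mul hp).neg_one_pow, neg_one_smul, eq_neg_iff_add_eq_zero, ← Ext.comp_add,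
    Ext.comp_assoc_of_second_deg_zero] at hsq
  exact eq_zero_of_extOfLinearMap_comp_eq_zero (eₚ.symm.trans e₀)
    (eq_zero_of_spliceClass_comp_eq_zero h hQ rfl _ hsq)

lemma projective_self_of_odd (h2 : IsUnit (2 : k)) (hp : Odd p)
    (h : ∀ i < p, IsShortExact (f i) (g i))
    (hZl : ∀ i < p, Module.Projective (Env.left k A) (Z i))
    (hZr : ∀ i < p, Module.Projective (Env.right k A) (Z i))
    (hQ : ∀ i < p, Module.Projective (Env k A) (Q i))
    (e₀ : A ≃ₗ[Env k A] Z 0) (eₚ : A ≃ₗ[Env k A] Z p) : Module.Projective (Env k A) A := by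
  have hζ := spliceClass_add_self_eq_zero hp h hZl hZr hQ e₀ eₚ
  obtain ⟨m, rfl⟩ : ∃ m, p = m + 1 := ⟨p - 1, by have := hp.pos; omega⟩
  obtain ⟨ψ, hψ⟩ := exists_extension_of_spliceClass_comp_eq_zero h
    (fun i hi => hQ i (hi.trans m.lt_succ_self)) (LinearMap.id + LinearMap.id)
    (by rw [extOfLinearMap_add, Ext.comp_add, comp_extOfLinearMap_id, hζ])
  have hψ' (x : Z (m + 1)) : ψ (f m x) = (2 : k) • x :=
    (LinearMap.congr_fun hψ x).trans (two_smul k x).symm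
  obtain ⟨c, hc⟩ := h2.exists_right_inv
  have := hQ m m.lt_succ_self
  refine .of_split (f m ∘ₗ eₚ.toLinearMap) (eₚ.symm.toLinearMap ∘ₗ (c • ψ))
    (LinearMap.ext fun a => eₚ.injective ?_)
  simp [hψ', smul_smul, mul_comm c, hc]

end

end BimodTensor

end GradedCommutativity

section Separability

namespace Env

variable {k : Type v} {A : Type u} [CommRing k] [Ring A] [Algebra k A]

variable (k A) in
lemma exists_separability_idempotent [Module.Projective (Env k A) A] :
    ∃ e : Env k A, e • (1 : A) = 1 ∧
      ∀ a : A, (a ⊗ₜ[k] 1 : Env k A) * e = ((1 : A) ⊗ₜ[k] MulOpposite.op a : Env k A) * e := by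
  have hμ : LinearMap.range (LinearMap.toSpanSingleton (Env k A) A 1) = ⊤ :=
    LinearMap.range_eq_top.2 fun a => ⟨a ⊗ₜ 1, (tmul_one_smul_self k a 1).trans (mul_one a)⟩
  obtain ⟨σ, hσ⟩ := LinearMap.exists_rightInverse_of_surjective _ hμ
  exact ⟨σ 1, LinearMap.congr_fun hσ 1, fun a =>
    (tmul_one_smul_map_one σ a).trans (one_tmul_smul_map_one σ (MulOpposite.op a)).symm⟩

variable {M N : Type*} [AddCommGroup M] [AddCommGroup N] [Module k M] [Module k N] [Module A M]
  [Module A N] [IsScalarTower k A M] [IsScalarTower k A N]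

/-- The action of the enveloping algebra on a `k`-linear map `p` between left `A`-modules, in which
`a ⊗ b` sends `p` to `x ↦ a • p (b • x)`. -/
noncomputable def conj (p : M →ₗ[k] N) : Env k A →ₗ[k] M →ₗ[k] N :=
  TensorProduct.lift <| LinearMap.mk₂ k
    (fun a b => Algebra.lsmul k k N a ∘ₗ p ∘ₗ Algebra.lsmul k k M (MulOpposite.unop b))
    (fun a a' b => by simp [LinearMap.add_comp]) (fun c a b => by simp [LinearMap.smul_comp])
    (fun a b b' => by simp [LinearMap.comp_add]) (fun c a b => by simp [LinearMap.comp_smul])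

lemma conj_tmul (p : M →ₗ[k] N) (a : A) (b : Aᵐᵒᵖ) (x : M) :
    conj p (a ⊗ₜ[k] b : Env k A) x = a • p (b.unop • x) :=
  rfl

lemma conj_tmul_one_mul (p : M →ₗ[k] N) (a : A) (r : Env k A) (x : M) :
    conj p ((a ⊗ₜ[k] 1 : Env k A) * r) x = a • conj p r x := by
  induction r using TensorProduct.induction_on with
  | zero => simp
  | tmul c b => simp [conj_tmul, mul_smul]
  | add r s hr hs => simp only [mul_add, map_add, LinearMap.add_apply, smul_add, hr, hs]

lemma conj_one_tmul_mul (p : M →ₗ[k] N) (a : A) (r : Env k A) (x : M) :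
    conj p (((1 : A) ⊗ₜ[k] MulOpposite.op a : Env k A) * r) x = conj p r (a • x) := by
  induction r using TensorProduct.induction_on with
  | zero => simp
  | tmul c b => simp [conj_tmul, mul_smul]
  | add r s hr hs => simp only [mul_add, map_add, LinearMap.add_apply, hr, hs]

lemma conj_apply_of_leftInverse {p : M →ₗ[k] N} {ι : N →ₗ[A] M} (hp : ∀ y, p (ι y) = y)
    (r : Env k A) (y : N) : conj p r (ι y) = (r • (1 : A)) • y := by
  induction r using TensorProduct.induction_on with
  | zero => rw [map_zero]; exact (zero_smul A y).symm
  | tmul a b =>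
    rw [conj_tmul, ← ι.map_smul, hp, tmul_smul_self, mul_one, mul_smul]
  | add r s hr hs => rw [map_add, LinearMap.add_apply, hr, hs, add_smul r s, add_smul]

lemma exists_leftInverse_of_projective [Module.Projective (Env k A) A] {ι : N →ₗ[A] M}
    {p : M →ₗ[k] N} (hp : ∀ y, p (ι y) = y) : ∃ q : M →ₗ[A] N, ∀ y, q (ι y) = y := by
  obtain ⟨e, he, hcomm⟩ := exists_separability_idempotent k A
  refine ⟨{ conj p e with map_smul' := fun a x => ?_ }, fun y => ?_⟩
  · change conj p e (a • x) = a • conj p e x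
    rw [← conj_one_tmul_mul, ← hcomm, conj_tmul_one_mul]
  · change conj p e (ι y) = y
    rw [conj_apply_of_leftInverse hp, he, one_smul]

end Env

lemma isSemisimpleModule_of_projective_env (k : Type v) {A : Type u} [Field k] [Ring A]
    [Algebra k A] [Module.Projective (Env k A) A] (M : Type*) [AddCommGroup M] [Module k M]
    [Module A M] [IsScalarTower k A M] : IsSemisimpleModule A M where
  exists_isCompl N := by
    obtain ⟨p, hp⟩ := (N.subtype.restrictScalars k).exists_leftInverse_of_injective
      (LinearMap.ker_eq_bot.2 N.injective_subtype)
    obtain ⟨q, hq⟩ := Env.exists_leftInverse_of_projective (ι := N.subtype) (p := p)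
      (LinearMap.congr_fun hp)
    exact ⟨_, LinearMap.isCompl_of_proj hq⟩

end Separability

section Syzygies

variable {R : Type u} [Ring R]

lemma isShortExact_range_subtype_rangeRestrict {M N L : Type u} [AddCommGroup M] [AddCommGroup N]
    [AddCommGroup L] [Module R M] [Module R N] [Module R L] {f : M →ₗ[R] N} {g : N →ₗ[R] L}
    (hfg : LinearMap.range f = LinearMap.ker g) :
    IsShortExact (LinearMap.range f).subtype g.rangeRestrict where
  injective := Subtype.val_injective
  surjective := g.surjective_rangeRestrict
  exact := by
    rw [LinearMap.exact_iff, LinearMap.ker_rangeRestrict, Submodule.range_subtype, hfg]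

lemma projective_range_of_range_eq_ker (S : Type u) [Ring S] [Module S R] [IsScalarTower S R R]
    [Module.Projective S R] {P : ℕ → Type u} [∀ i, AddCommGroup (P i)] [∀ i, Module R (P i)]
    [∀ i, Module S (P i)] [∀ i, IsScalarTower S R (P i)] {d : ∀ i, P (i + 1) →ₗ[R] P i} {n : ℕ}
    (hP : ∀ i < n, Module.Projective R (P (i + 1)))
    (hex : ∀ i < n, LinearMap.range (d (i + 1)) = LinearMap.ker (d i))
    (h0 : Module.Projective S (LinearMap.range (d 0))) {i : ℕ} (hi : i ≤ n) :
    Module.Projective S (LinearMap.range (d i)) := by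
  induction i with
  | zero => exact h0
  | succ i ih =>
    have := ih (Nat.le_of_succ_le hi)
    have := hP i hi
    have : Module.Projective S (P (i + 1)) := projective_of_isScalarTower R
    exact ((isShortExact_range_subtype_rangeRestrict (hex i hi)).restrictScalars S).projective_left

end Syzygies

section Periodicity

lemma projective_self_of_odd_period {k : Type v} {A : Type u} [CommRing k] [Ring A] [Algebra k A]
    [Module.Projective k A] (h2 : IsUnit (2 : k)) {n : ℕ} (hn : Odd n) {P : ℕ → Type u}
    [∀ i, AddCommGroup (P i)] [∀ i, Module (Env k A) (P i)] {d : ∀ i, P (i + 1) →ₗ[Env k A] P i}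
    (hP : ∀ i < n, Module.Projective (Env k A) (P (i + 1)))
    (hex : ∀ i < n, LinearMap.range (d (i + 1)) = LinearMap.ker (d i))
    (e₀ : A ≃ₗ[Env k A] LinearMap.range (d 0)) (eₙ : A ≃ₗ[Env k A] LinearMap.range (d n)) :
    Module.Projective (Env k A) A := by
  let (i : ℕ) : Module k (P i) := Module.compHom (P i) (algebraMap k (Env k A))
  have (i : ℕ) : IsScalarTower k (Env k A) (P i) :=
    ⟨fun c r x => (congrArg (· • x) (Algebra.smul_def c r)).trans (mul_smul _ r x)⟩
  refine BimodTensor.projective_self_of_odd h2 hn (Z := fun i => LinearMap.range (d i))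
    (Q := fun i => P (i + 1)) (fun i hi => isShortExact_range_subtype_rangeRestrict (hex i hi))
    (fun i hi => ?_) (fun i hi => ?_) hP e₀ eₙ
  · exact projective_range_of_range_eq_ker (Env.left k A) hP hex
      (.of_equiv' (e₀.restrictScalars (Env.left k A))) hi.le
  · exact projective_range_of_range_eq_ker (Env.right k A) hP hex
      (.of_equiv' (e₀.restrictScalars (Env.right k A))) hi.le

end Periodicity

theorem minimal_period_even_general (k A : Type) [Field k] (hchar : ringChar k ≠ 2)
    [Ring A] [Algebra k A] (hss : ¬ IsSemisimpleRing A) (n : ℕ)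
    (hper : HasProjExactSeq (A ⊗[k] Aᵐᵒᵖ) (regularBimodule k A) (regularBimodule k A) n) :
    Even n := by
  by_contra hn
  obtain ⟨P, d, e₀, eₙ, hP, hd₀, hdₙ, hex⟩ := hper
  have : Module.Projective (Env k A) A :=
    projective_self_of_odd_period (Ring.two_ne_zero hchar).isUnit (Nat.not_even_iff_odd.1 hn)
      (P := fun i => P i) (d := d) (fun i hi => hP (i + 1) i.succ_pos hi) hex
      (e₀.symm.trans (LinearEquiv.ofTop _ (LinearMap.range_eq_top.2 hd₀)).symm)
      (eₙ.trans (LinearEquiv.ofInjective (d n) hdₙ))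
  exact hss (isSemisimpleModule_of_projective_env k A)

/-- Let `k` be a perfect field of characteristic different from two, and `A`
a finite-dimensional ring-indecomposable non-semisimple periodic `k`-algebra. Then the minimal
period of `A` — the least `n ≥ 1` admitting an exact sequence
`0 → A → P_{n-1} → ⋯ → P_0 → A → 0` of bimodules with the `P_i` projective over
`A ⊗[k] Aᵐᵒᵖ` — is even. -/
theorem minimal_period_even (k A : Type) [Field k] [PerfectField k] (hchar : ringChar k ≠ 2)
    [Ring A] [Algebra k A] [FiniteDimensional k A]
    (hind : ∀ e : A, e ∈ Subring.center A → e * e = e → e = 0 ∨ e = 1)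
    (hss : ¬ IsSemisimpleRing A)
    (n : ℕ) (hn : 1 ≤ n)
    (hper : HasProjExactSeq (A ⊗[k] Aᵐᵒᵖ) (regularBimodule k A) (regularBimodule k A) n)
    (hmin : ∀ m, 1 ≤ m →
      HasProjExactSeq (A ⊗[k] Aᵐᵒᵖ) (regularBimodule k A) (regularBimodule k A) m → n ≤ m) :
    Even n :=
  minimal_period_even_general k A hchar hss n hper
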